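/- Let g(x) = (λ^{ν−1/2}/Γ(2ν−1)^{1/2}) x^{ν−1} e^{−λx/2} with ν > 1/2, λ > 0, and let h > 0. Then ∫₀^∞ g(t+h) g(t) dt = (1/(2^{ν−3/2} Γ(ν−1/2))) · (λh/2)^{ν−1/2} · K_{ν−1/2}(λh/2). -/

import Mathlib

open MeasureTheory Set Real

/-- The modified Bessel function of the third kind (Basset's integral
representation): `K_μ(x) = ∫₀^∞ exp(-x cosh t) cosh(μ t) dt` for `x > 0`. -/
noncomputable def besselK (μ x : ℝ) : ℝ :=
  ∫ t in Ioi (0:ℝ), Real.exp (-x * Real.cosh t) * Real.cosh (μ * t)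


lemma aux_symm (f : ℝ → ENNReal) (hf : Measurable f) :
    ∫⁻ t, f t = ∫⁻ t in Ioi (0:ℝ), (f t + f (-t)) := by
  rw [lintegral_add_left hf, ← lintegral_add_compl f (measurableSet_Ioi (a := (0:ℝ)))]
  congr 1
  rw [compl_Ioi, ← setLIntegral_congr (Iio_ae_eq_Iic (a := (0:ℝ)) (μ := volume))]
  have h := (Measure.measurePreserving_neg (volume : Measure ℝ)).setLIntegral_comp_preimage
    (measurableSet_Iio (a := (0:ℝ))) hf
  rw [← h]
  congr 2
  ext x
  simp

lemma aux_bessel (μ x : ℝ) :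
    ∫⁻ t, ENNReal.ofReal (exp (μ * t) * exp (-x * cosh t))
      = 2 * ∫⁻ t in Ioi (0:ℝ), ENNReal.ofReal (exp (-x * cosh t) * cosh (μ * t)) := by
  rw [aux_symm _ (by fun_prop), ← lintegral_const_mul _ (by fun_prop)]
  congr 1
  ext t
  rw [← ENNReal.ofReal_add (by positivity) (by positivity),
    show (2:ENNReal) = ENNReal.ofReal 2 by simp, ← ENNReal.ofReal_mul (by norm_num)]
  congr 1
  rw [cosh_neg, cosh_eq (μ * t)]
  ring_nf

lemma aux_half (z : ℝ) (hz : 0 < z) :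
    ∫⁻ s, ENNReal.ofReal (exp (-1/2 * s) * exp (-z * cosh s))
      = ENNReal.ofReal (√(2 * π / z) * exp (-z)) := by
  rw [aux_bessel]
  have key : 2 * ∫⁻ t in Ioi (0:ℝ), ENNReal.ofReal (exp (-z * cosh t) * cosh (-1/2 * t))
      = ∫⁻ t, ENNReal.ofReal (exp (-z * cosh t) * cosh (1/2 * t)) := by
    rw [aux_symm _ (by fun_prop), ← lintegral_const_mul _ (by fun_prop)]
    congr 1
    ext t
    rw [two_mul]
    have h1 : cosh (-1/2 * t) = cosh (1/2 * t) := by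
      rw [← cosh_neg]; ring_nf
    have h2 : cosh (1/2 * -t) = cosh (1/2 * t) := by
      rw [← cosh_neg]; ring_nf
    rw [h1, h2, cosh_neg]
  rw [key]
  have hinj : Function.Injective (fun t : ℝ => sinh (1/2 * t)) := by
    intro a b hab
    have := sinh_injective hab
    linarith
  have hsurj : Function.Surjective (fun t : ℝ => sinh (1/2 * t)) := by
    intro y
    exact ⟨2 * arsinh y, by simp⟩
  have hd : ∀ t ∈ (univ : Set ℝ), HasDerivWithinAt (fun t : ℝ => sinh (1/2 * t))
      (cosh (1/2 * t) * (1/2)) univ t := by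
    intro t _
    have := ((hasDerivAt_id t).const_mul (1/2 : ℝ)).sinh
    exact (this.congr_deriv (by simp)).hasDerivWithinAt
  have hc := lintegral_image_eq_lintegral_abs_deriv_mul MeasurableSet.univ hd hinj.injOn
    (fun u => ENNReal.ofReal (2 * exp (-z) * exp (-(2*z) * u^2)))
  rw [image_univ, hsurj.range_eq, Measure.restrict_univ] at hc
  have e : ∀ t : ℝ, ENNReal.ofReal (exp (-z * cosh t) * cosh (1/2 * t)) =
      ENNReal.ofReal |cosh (1/2 * t) * (1/2)| *
        ENNReal.ofReal (2 * exp (-z) * exp (-(2*z) * (sinh (1/2 * t))^2)) := by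
    intro t
    rw [← ENNReal.ofReal_mul (abs_nonneg _), abs_of_pos (by have := cosh_pos (1/2*t); positivity)]
    congr 1
    have h1 : cosh t = 1 + 2 * sinh (1/2*t)^2 := by
      have := cosh_two_mul (1/2*t)
      rw [cosh_sq, show 2 * (1/2*t) = t by ring] at this
      linarith
    have h2 : exp (-z * cosh t) = exp (-z) * exp (-(2*z) * (sinh (1/2 * t))^2) := by
      rw [← exp_add, h1]; ring_nf
    rw [h2]; ring
  simp_rw [e]
  rw [← hc, ← ofReal_integral_eq_lintegral_ofReal]
  · rw [integral_const_mul, integral_gaussian]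
    congr 1
    have : √(2 * π / z) = 2 * √(π / (2*z)) := by
      rw [show 2 * π / z = 2^2 * (π/(2*z)) by field_simp, sqrt_mul (by norm_num),
        sqrt_sq (by norm_num)]
    rw [this]; ring
  · exact (integrable_exp_neg_mul_sq (by positivity)).const_mul _
  · exact Filter.Eventually.of_forall fun u => by positivity

lemma aux_shift (x T : ℝ) (hx : 0 < x) (hT : 0 < T) :
    ∫⁻ t, ENNReal.ofReal (exp (-1/2 * t) * exp (-(x/2) * (T^2 * exp (-t) + exp t)))
      = ENNReal.ofReal (√(2 * π / x) * (T⁻¹ * exp (-(x*T)))) := by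
  rw [← lintegral_add_right_eq_self _ (log T)]
  have e : ∀ t : ℝ, ENNReal.ofReal (exp (-1/2 * (t + log T)) *
        exp (-(x/2) * (T^2 * exp (-(t + log T)) + exp (t + log T))))
      = ENNReal.ofReal (√T)⁻¹ * ENNReal.ofReal (exp (-1/2 * t) * exp (-(x*T) * cosh t)) := by
    intro t
    rw [← ENNReal.ofReal_mul (by positivity)]
    congr 1
    have h1 : exp (-1/2 * (t + log T)) = (√T)⁻¹ * exp (-1/2*t) := by
      rw [mul_add, exp_add, sqrt_eq_rpow, ← rpow_neg hT.le, rpow_def_of_pos hT]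
      ring_nf
    have h2 : exp (-(t + log T)) = T⁻¹ * exp (-t) := by
      rw [neg_add, exp_add, exp_neg (log T), exp_log hT]; ring
    rw [h1, h2, exp_add, exp_log hT, cosh_eq, mul_assoc]
    congr 3
    field_simp
    ring
  simp_rw [e]
  rw [lintegral_const_mul _ (by fun_prop), aux_half _ (by positivity),
    ← ENNReal.ofReal_mul (by positivity)]
  congr 1
  rw [← div_div, sqrt_div (by positivity)]
  have := mul_self_sqrt hT.le
  have hs : 0 < √T := sqrt_pos.2 hT
  nth_rw 4 [← this]
  field_simp

lemma aux_gamma (ν k h : ℝ) (hν : 0 < ν) (hk : 0 < k) (hh : 0 < h) :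
    ∫⁻ τ in Ioi (0:ℝ), ENNReal.ofReal
      ((τ * (τ + h)) ^ (ν - 1) * (2 * τ + h) * exp (-(k * (τ * (τ + h)))))
      = ENNReal.ofReal ((1 / k) ^ ν * Gamma ν) := by
  have hd : ∀ t ∈ Ioi (0:ℝ), HasDerivWithinAt (fun t : ℝ => t * (t + h))
      (2 * t + h) (Ioi 0) t := by
    intro t _
    have := (hasDerivAt_id t).mul ((hasDerivAt_id t).add_const h)
    refine (this.congr_deriv ?_).hasDerivWithinAt
    simp; ring
  have hinj : InjOn (fun t : ℝ => t * (t + h)) (Ioi 0) := by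
    intro a ha b hb hab
    simp only [mem_Ioi] at ha hb hab
    have : (a - b) * (a + b + h) = 0 := by linarith
    rcases mul_eq_zero.1 this with h1 | h1 <;> linarith
  have him : (fun t : ℝ => t * (t + h)) '' Ioi 0 = Ioi 0 := by
    ext y
    constructor
    · rintro ⟨t, ht, rfl⟩
      simp only [mem_Ioi] at ht ⊢
      positivity
    · intro hy
      simp only [mem_Ioi] at hy
      have hs : √(h^2 + 4*y) ^ 2 = h^2 + 4*y := sq_sqrt (by positivity)
      have hlt : h < √(h^2 + 4*y) := by
        apply lt_sqrt_of_sq_lt; linarith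
      refine ⟨(√(h^2 + 4*y) - h)/2, ?_, ?_⟩
      · simp only [mem_Ioi]; linarith
      · simp only; nlinarith
  have hc := lintegral_image_eq_lintegral_abs_deriv_mul measurableSet_Ioi hd hinj
    (fun u => ENNReal.ofReal (u ^ (ν - 1) * exp (-(k * u))))
  rw [him] at hc
  rw [← integral_rpow_mul_exp_neg_mul_Ioi hν hk, ofReal_integral_eq_lintegral_ofReal, hc]
  · refine setLIntegral_congr_fun measurableSet_Ioi ?_
    intro t ht
    simp only [mem_Ioi] at ht
    simp only
    rw [← ENNReal.ofReal_mul (abs_nonneg _), abs_of_pos (by positivity)]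
    congr 1; ring
  · have := integrableOn_rpow_mul_exp_neg_mul_rpow (p := 1) (s := ν - 1) (b := k)
      (by linarith) (by norm_num) hk
    simpa [IntegrableOn] using this
  · filter_upwards [ae_restrict_mem measurableSet_Ioi] with u hu
    simp only [mem_Ioi] at hu
    simp only [Pi.zero_apply]
    positivity

lemma aux_main (ν lam h : ℝ) (hν : 0 < ν) (hlam : 0 < lam) (hh : 0 < h) :
    ENNReal.ofReal (h * √(2 * π / (lam * h / 2)) * exp (-(lam * h / 2))) *
      ∫⁻ τ in Ioi (0:ℝ), ENNReal.ofReal ((τ * (τ + h)) ^ (ν - 1) * exp (-(lam * τ)))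
    = ENNReal.ofReal ((h / lam) ^ ν * Gamma ν) * (2 * ∫⁻ t in Ioi (0:ℝ),
        ENNReal.ofReal (exp (-(lam * h / 2) * cosh t) * cosh ((ν - 1/2) * t))) := by
  set x := lam * h / 2 with hx
  have hx0 : 0 < x := by positivity
  have hG := Gamma_pos_of_pos hν
  rw [← aux_bessel, ← lintegral_const_mul _ (by fun_prop), ← lintegral_const_mul _ (by fun_prop)]
  have hswap := lintegral_lintegral_swap (μ := volume.restrict (Ioi (0:ℝ)))
    (ν := (volume : Measure ℝ))
    (f := fun τ t => ENNReal.ofReal ((τ * (τ + h)) ^ (ν - 1) * (2 * τ + h)) *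
      ENNReal.ofReal (exp (-1/2 * t) * exp (-(x/2) * (((2*τ+h)/h)^2 * exp (-t) + exp t))))
    (by
      apply Measurable.aemeasurable
      unfold Function.uncurry
      fun_prop)
  calc _ = _ := ?_
    _ = _ := hswap
    _ = _ := ?_
  · refine setLIntegral_congr_fun measurableSet_Ioi ?_
    intro τ hτ
    simp only [mem_Ioi] at hτ
    simp only
    rw [lintegral_const_mul _ (by fun_prop), aux_shift _ _ hx0 (by positivity),
      ← ENNReal.ofReal_mul (by positivity), ← ENNReal.ofReal_mul (by positivity)]
    congr 1
    have : exp (-(x * ((2*τ+h)/h))) = exp (-x) * exp (-(lam * τ)) := by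
      rw [← exp_add, hx]; congr 1; field_simp; ring
    rw [this]
    field_simp
  · congr 1
    ext t
    have e : ∀ τ ∈ Ioi (0:ℝ), ENNReal.ofReal ((τ * (τ + h)) ^ (ν - 1) * (2 * τ + h)) *
      ENNReal.ofReal (exp (-1/2 * t) * exp (-(x/2) * (((2*τ+h)/h)^2 * exp (-t) + exp t)))
      = ENNReal.ofReal (exp (-1/2 * t) * exp (-x * cosh t)) * ENNReal.ofReal
      ((τ * (τ + h)) ^ (ν - 1) * (2 * τ + h) * exp (-((lam / h * exp (-t)) * (τ * (τ + h))))) := by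
      intro τ hτ
      simp only [mem_Ioi] at hτ
      rw [← ENNReal.ofReal_mul (by positivity), ← ENNReal.ofReal_mul (by positivity)]
      congr 1
      have : exp (-(x/2) * (((2*τ+h)/h)^2 * exp (-t) + exp t)) =
        exp (-x * cosh t) * exp (-((lam / h * exp (-t)) * (τ * (τ + h)))) := by
        rw [← exp_add, hx, cosh_eq]; congr 1; field_simp; ring
      rw [this]; ring
    rw [setLIntegral_congr_fun measurableSet_Ioi e, lintegral_const_mul _ (by fun_prop),
      aux_gamma _ _ _ hν (by positivity) hh, ← ENNReal.ofReal_mul (by positivity),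
      ← ENNReal.ofReal_mul (by positivity)]
    congr 1
    have h1 : (1 / (lam / h * exp (-t))) ^ ν = (h/lam)^ν * exp (ν * t) := by
      rw [show 1 / (lam / h * exp (-t)) = (h/lam) * exp t by rw [exp_neg]; field_simp,
        mul_rpow (by positivity) (by positivity), ← exp_mul, mul_comm t]
    have h2 : exp ((ν - 1/2) * t) = exp (-1/2*t) * exp (ν * t) := by
      rw [← exp_add]; ring_nf
    rw [h1, h2]; ring

lemma aux_real (ν lam h : ℝ) (hν : 0 < ν) (hlam : 0 < lam) (hh : 0 < h) :
    h * √(2 * π / (lam * h / 2)) * exp (-(lam * h / 2)) *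
      ∫ τ in Ioi (0:ℝ), (τ * (τ + h)) ^ (ν - 1) * exp (-(lam * τ))
    = (h / lam) ^ ν * Gamma ν * (2 * besselK (ν - 1/2) (lam * h / 2)) := by
  have hm := congrArg ENNReal.toReal (aux_main ν lam h hν hlam hh)
  have hG := Gamma_pos_of_pos hν
  rw [ENNReal.toReal_mul, ENNReal.toReal_mul, ENNReal.toReal_mul,
    ENNReal.toReal_ofReal (by positivity), ENNReal.toReal_ofReal (by positivity)] at hm
  rw [besselK, integral_eq_lintegral_of_nonneg_ae, integral_eq_lintegral_of_nonneg_ae]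
  · simpa using hm
  · exact Filter.Eventually.of_forall fun t => by
      have := cosh_pos ((ν - 1/2) * t)
      simp only [Pi.zero_apply]
      positivity
  · exact Measurable.aestronglyMeasurable (by fun_prop)
  · filter_upwards [ae_restrict_mem measurableSet_Ioi] with u hu
    simp only [mem_Ioi] at hu
    simp only [Pi.zero_apply]
    positivity
  · exact Measurable.aestronglyMeasurable (by fun_prop)

theorem gamma_kernel_autocovariance (ν lam h : ℝ) (hν : 1 / 2 < ν) (hlam : 0 < lam)
    (hh : 0 < h) :
    let g : ℝ → ℝ := fun x =>
      lam ^ (ν - 1 / 2) / (Real.Gamma (2 * ν - 1)) ^ ((1:ℝ) / 2) *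
        x ^ (ν - 1) * Real.exp (-lam * x / 2)
    ∫ t in Ioi (0:ℝ), g (t + h) * g t
      = 1 / ((2:ℝ) ^ (ν - 3 / 2) * Real.Gamma (ν - 1 / 2)) *
          (lam * h / 2) ^ (ν - 1 / 2) * besselK (ν - 1 / 2) (lam * h / 2) := by
  intro g
  have hν0 : 0 < ν := by linarith
  have hr := aux_real ν lam h hν0 hlam hh
  have hG := Gamma_pos_of_pos hν0
  have hG1 : 0 < Gamma (ν - 1/2) := Gamma_pos_of_pos (by linarith)
  have hG2 : 0 < Gamma (2*ν - 1) := Gamma_pos_of_pos (by linarith)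
  have hdup := Gamma_mul_Gamma_add_half (ν - 1/2)
  rw [show ν - 1/2 + 1/2 = ν by ring, show 2 * (ν - 1/2) = 2*ν - 1 by ring,
    show 1 - (2*ν - 1) = 2 - 2*ν by ring] at hdup
  have e : ∀ t ∈ Ioi (0:ℝ), g (t + h) * g t =
      ((lam ^ (ν - 1/2))^2 / Gamma (2*ν-1) * exp (-(lam*h/2))) *
        ((t * (t + h)) ^ (ν - 1) * exp (-(lam * t))) := by
    intro t ht
    simp only [mem_Ioi] at ht
    simp only [g]
    rw [mul_rpow ht.le (by positivity), ← sqrt_eq_rpow]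
    have h1 : exp (-lam * (t+h)/2) * exp (-lam*t/2) = exp (-(lam*h/2)) * exp (-(lam*t)) := by
      rw [← exp_add, ← exp_add]; ring_nf
    have h2 : Gamma (2*ν-1) = √(Gamma (2*ν-1)) * √(Gamma (2*ν-1)) := (mul_self_sqrt hG2.le).symm
    calc _ = (lam ^ (ν - 1/2))^2 / (√(Gamma (2*ν-1)) * √(Gamma (2*ν-1))) *
        ((t+h)^(ν-1) * t^(ν-1)) * (exp (-lam * (t+h)/2) * exp (-lam*t/2)) := by
          field_simp
      _ = _ := by rw [h1, ← h2]; ring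
  rw [setIntegral_congr_fun measurableSet_Ioi e, integral_const_mul]
  set I := ∫ τ in Ioi (0:ℝ), (τ * (τ + h)) ^ (ν - 1) * exp (-(lam * τ))
  set K := besselK (ν - 1/2) (lam * h / 2)
  -- solve for exp * I
  have hsq : h * √(2 * π / (lam * h / 2)) = 2 * √π * √h / √lam := by
    rw [show 2 * π / (lam * h / 2) = 2^2 * π / (lam * h) by field_simp,
      sqrt_div (by positivity), sqrt_mul (by norm_num), sqrt_sq (by norm_num),
      sqrt_mul hlam.le]
    have := mul_self_sqrt hh.le
    have hs : 0 < √h := sqrt_pos.2 hh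
    have hs : 0 < √lam := sqrt_pos.2 hlam
    nth_rw 1 [← this]
    field_simp
  have hpow : (h/lam)^ν = h^(ν-1/2) / lam^(ν-1/2) * (√h / √lam) := by
    rw [div_rpow hh.le hlam.le, sqrt_eq_rpow, sqrt_eq_rpow, div_mul_div_comm,
      ← rpow_add hh, ← rpow_add hlam]
    ring_nf
  rw [hsq, hpow] at hr
  have hs : 0 < √h := sqrt_pos.2 hh
  have hs' : 0 < √lam := sqrt_pos.2 hlam
  have hp : 0 < √π := sqrt_pos.2 pi_pos
  have hl : 0 < lam ^ (ν - 1/2) := by positivity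
  have hEI : exp (-(lam*h/2)) * I = h^(ν-1/2) / lam^(ν-1/2) * Gamma ν * K / √π := by
    have hne : 2 * √h / √lam ≠ 0 := by positivity
    apply mul_left_cancel₀ (mul_ne_zero hne hp.ne')
    calc _ = 2 * √π * √h / √lam * exp (-(lam*h/2)) * I := by ring
      _ = _ := hr
      _ = _ := by field_simp
  rw [mul_assoc, hEI]
  have hGν : Gamma ν = Gamma (2*ν-1) * 2^(2-2*ν) * √π / Gamma (ν - 1/2) := by
    rw [← hdup, mul_div_cancel_left₀ _ hG1.ne']
  have h2 : (2:ℝ)^(2-2*ν) = ((2:ℝ)^(ν-3/2))⁻¹ * ((2:ℝ)^(ν-1/2))⁻¹ := by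
    rw [← rpow_neg (by norm_num), ← rpow_neg (by norm_num), ← rpow_add (by norm_num)]
    ring_nf
  rw [hGν, h2, div_rpow (by positivity) (by norm_num), mul_rpow hlam.le hh.le]
  have ha : (0:ℝ) < 2^(ν-3/2) := by positivity
  have hb : (0:ℝ) < 2^(ν-1/2) := by positivity
  generalize Gamma (2*ν-1) = A at *
  generalize Gamma (ν-1/2) = B at *
  generalize (2:ℝ)^(ν-3/2) = C at *
  generalize (2:ℝ)^(ν-1/2) = D at *
  generalize lam^(ν-1/2) = E at *
  field_simp
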